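/- Let u be H-harmonic on B_n with a boundary distribution (u is smooth by elliptic regularity). Let Y be a finite composition (possibly empty) of the rotation operators L_{i,j} = x_i ∂/∂x_j − x_j ∂/∂x_i (1 ≤ i ≠ j ≤ n), let k ≥ 0 be an integer, and set X = N^k ∘ Y. Then: (1) if k ≤ n−2, for every Φ ∈ C^∞(S^{n-1}) the limit lim_{r→1⁻} ∫_{S^{n-1}} Xu(rζ)Φ(ζ) dσ(ζ) exists and is finite; (2) if k = n−1, for every Φ ∈ C^∞(S^{n-1}) one has ∫_{S^{n-1}} Xu(rζ)Φ(ζ) dσ(ζ) = O(log(1/(1-r))) as r → 1⁻, and in particular lim_{r→1⁻} (1-r²)∫_{S^{n-1}} Xu(rζ)Φ(ζ) dσ(ζ) = 0. -/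

import Mathlib

/-!
The idea is to reduce the statement to an ordinary differential equation in the radius `r`.
Write `θ = r d/dr` and `F_Φ(r) = ∫ u(rζ) Φ(ζ) dσ(ζ)` (`sphI u Φ r`). Since `θ` acts on pairings as
`N` acts on functions (`hasDerivAt_sphI`), `∫ (N^k u)(rζ) Φ(ζ) dσ(ζ) = θ^k F_Φ(r)`. Since
rotations preserve `σ`, the operators `L_{i,j}` are skew-symmetric on the sphere (`sphI_rot`), so a
composition `Y` of them only changes the test function (`compRots_transfer`), and it remains to
treat `X = N^k`.

In polar coordinates `r²Δ = N² + (n-2) N + Δ_σ` with `Δ_σ = ½ Σ_{i,j} L_{i,j}²` (`lap_polar`), so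
`H`-harmonicity integrated against `Φ` reads (`radial_ode`)
`(1 - r²) θ²F_Φ + (n-2)(1 + r²) θF_Φ + (1 - r²) F_{Δ_σ Φ} = 0`.
Applying `θ^m` (`chain_eq`) gives for `H = θ^(m+1) F_Φ` an equation
`(1 - r²) θH + ((n-2)(1 + r²) - 2m r²) H = R`,
where `R` is a combination of `θ^j F_Φ` and `θ^j F_{Δ_σ Φ}` with `j ≤ m`, and hence has a limit at
`1` by induction on `m`, the induction hypothesis being available for every test function. At
`r = 1` the coefficient of `H` is `2(n-2-m)`. If `m < n-2`, it is positive and `H` has a limit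
(`ode_tendsto`); if `m = n-2`, it vanishes and `H` is of size `O(log (1/(1-r)))` (`ode_log`). Both
facts follow from an integrating factor and L'Hôpital's rule in the `∞/∞` form
(`tendsto_div_of_deriv`).
-/

open MeasureTheory Metric Filter Topology Set
open scoped ContDiff ENNReal NNReal

noncomputable section

/-- `E n` is the Euclidean space `ℝⁿ`. -/
abbrev E (n : ℕ) := EuclideanSpace ℝ (Fin n)

/-- The normalized surface measure `σ` on the unit sphere `S^{n-1}` (total mass `1`). -/
noncomputable def sphMeasure (n : ℕ) : Measure (E n) :=
  ((μH[(n : ℝ) - 1] (sphere (0 : E n) 1))⁻¹) • ((μH[(n : ℝ) - 1]).restrict (sphere (0 : E n) 1))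

/-- The Euclidean Laplacian `Δu(x) = Σ ∂²u/∂x_i²`. -/
noncomputable def lap (n : ℕ) (u : E n → ℝ) (x : E n) : ℝ :=
  ∑ i : Fin n, fderiv ℝ (fun y => fderiv ℝ u y (EuclideanSpace.single i 1)) x (EuclideanSpace.single i 1)

/-- The normal derivation operator `Nu(x) = Σ x_i ∂u/∂x_i(x)`, i.e. the derivative of `u`
at `x` in the direction `x`. -/
noncomputable def Nder (n : ℕ) (u : E n → ℝ) (x : E n) : ℝ := fderiv ℝ u x x

/-- `u` is `H`-harmonic on `B_n` :
`Du(x) = (1-|x|²)²Δu(x) + 2(n-2)(1-|x|²)Nu(x) = 0` on the unit ball. -/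
def HHarmonic (n : ℕ) (u : E n → ℝ) : Prop :=
  ∀ x ∈ ball (0 : E n) 1,
    (1 - ‖x‖ ^ 2) ^ 2 * lap n u x + 2 * ((n : ℝ) - 2) * (1 - ‖x‖ ^ 2) * Nder n u x = 0

/-- The hyperbolic Poisson kernel `P_h(x,ξ) = ((1-|x|²)/|x-ξ|²)^{n-1}`. -/
noncomputable def Ph (n : ℕ) (x ξ : E n) : ℝ := ((1 - ‖x‖ ^ 2) / ‖x - ξ‖ ^ 2) ^ (n - 1)

/-- The Euclidean Poisson kernel `P_e(x,ξ) = (1-|x|²)/|x-ξ|ⁿ`. -/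
noncomputable def Pe (n : ℕ) (x ξ : E n) : ℝ := (1 - ‖x‖ ^ 2) / ‖x - ξ‖ ^ n

/-- `u` has a boundary distribution : for every smooth `Φ` on the sphere,
`∫ u(rζ)Φ(ζ)dσ(ζ)` has a finite limit as `r → 1⁻`. -/
def HasBoundaryDistribution (n : ℕ) (u : E n → ℝ) : Prop :=
  ∀ Φ : E n → ℝ, ContDiff ℝ ∞ Φ →
    ∃ L : ℝ, Tendsto (fun r : ℝ => ∫ ζ, u (r • ζ) * Φ ζ ∂(sphMeasure n)) (𝓝[<] (1 : ℝ)) (𝓝 L)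

/-- The operator `N = Σ x_i ∂/∂x_i` acting on functions. -/
noncomputable def NOp (n : ℕ) : (E n → ℝ) → (E n → ℝ) := fun u x => fderiv ℝ u x x

/-- The rotation operator `L_{i,j} = x_i ∂/∂x_j − x_j ∂/∂x_i` acting on functions. -/
noncomputable def rotOp (n : ℕ) (i j : Fin n) : (E n → ℝ) → (E n → ℝ) := fun u x =>
  x i * fderiv ℝ u x (EuclideanSpace.single j 1) - x j * fderiv ℝ u x (EuclideanSpace.single i 1)

/-- The composition `L_{i₁,j₁} ∘ … ∘ L_{i_m,j_m}` of rotation operators indexed by a list. -/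
noncomputable def compRots (n : ℕ) (L : List (Fin n × Fin n)) : (E n → ℝ) → (E n → ℝ) :=
  L.foldr (fun q T => rotOp n q.1 q.2 ∘ T) id

/-! ### Singular first-order equations on `(0, 1)` -/

/-- L'Hôpital's rule at `1⁻` when only the denominator is known to tend to infinity. -/
theorem tendsto_div_of_deriv {f g f' g' : ℝ → ℝ} {l : ℝ}
    (hf : ∀ r ∈ Ioo (0 : ℝ) 1, HasDerivAt f (f' r) r)
    (hg : ∀ r ∈ Ioo (0 : ℝ) 1, HasDerivAt g (g' r) r)
    (hpos : ∀ r ∈ Ioo (0 : ℝ) 1, 0 < g' r)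
    (htop : Tendsto g (𝓝[<] 1) atTop)
    (hdiv : Tendsto (fun r => f' r / g' r) (𝓝[<] 1) (𝓝 l)) :
    Tendsto (fun r => f r / g r) (𝓝[<] 1) (𝓝 l) := by
  rw [Metric.tendsto_nhds]
  intro ε hε
  have h1 : ∀ᶠ r in 𝓝[<] (1 : ℝ), dist (f' r / g' r) l < ε / 2 :=
    Metric.tendsto_nhds.1 hdiv _ (half_pos hε)
  have h0 : Ioo (0 : ℝ) 1 ∈ 𝓝[<] (1 : ℝ) := Ioo_mem_nhdsLT one_pos
  obtain ⟨b, hb, hb'⟩ := (mem_nhdsLT_iff_exists_Ioo_subset' (show (0 : ℝ) < 1 by norm_num)).1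
    (h1.and h0)
  set a := (b + 1) / 2 with ha
  have hb1 : b < 1 := hb
  have hab : b < a := by rw [ha]; linarith
  have ha1 : a < 1 := by rw [ha]; linarith
  have hK : Tendsto (fun r => (f a - l * g a - (ε / 2) * g a) / g r) (𝓝[<] 1) (𝓝 0) :=
    tendsto_const_nhds.div_atTop htop
  have hK' : Tendsto (fun r => (f a - l * g a + (ε / 2) * g a) / g r) (𝓝[<] 1) (𝓝 0) :=
    tendsto_const_nhds.div_atTop htop
  filter_upwards [Metric.tendsto_nhds.1 hK _ (half_pos hε),
    Metric.tendsto_nhds.1 hK' _ (half_pos hε), htop.eventually_gt_atTop 0,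
    Ioo_mem_nhdsLT ha1] with r hr1 hr2 hgr hra
  have hsub : ∀ x ∈ Icc a r, x ∈ Ioo b 1 := fun x hx =>
    ⟨hab.trans_le hx.1, hx.2.trans_lt hra.2⟩
  obtain ⟨c, hc, hc'⟩ := exists_ratio_hasDerivAt_eq_ratio_slope f f' hra.1
    (fun x hx => ((hf x (hb' (hsub x hx)).2).continuousAt).continuousWithinAt)
    (fun x hx => hf x (hb' (hsub x ⟨hx.1.le, hx.2.le⟩)).2) g g'
    (fun x hx => ((hg x (hb' (hsub x hx)).2).continuousAt).continuousWithinAt)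
    (fun x hx => hg x (hb' (hsub x ⟨hx.1.le, hx.2.le⟩)).2)
  obtain ⟨e, he, he'⟩ := exists_hasDerivAt_eq_slope g g' hra.1
    (fun x hx => ((hg x (hb' (hsub x hx)).2).continuousAt).continuousWithinAt)
    (fun x hx => hg x (hb' (hsub x ⟨hx.1.le, hx.2.le⟩)).2)
  have hgar : 0 < g r - g a := by
    have := hpos e (hb' (hsub e ⟨he.1.le, he.2.le⟩)).2
    rw [he'] at this
    have h3 : 0 < r - a := sub_pos.2 hra.1
    rwa [div_pos_iff_of_pos_right h3] at this
  have hcb := hb' (hsub c ⟨hc.1.le, hc.2.le⟩)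
  have hgc := hpos c hcb.2
  have hsl : f' c / g' c = (f r - f a) / (g r - g a) := by
    rw [div_eq_div_iff hgc.ne' hgar.ne']; linarith
  have h5 := hcb.1
  rw [hsl, Real.dist_eq, abs_lt, lt_sub_iff_add_lt, sub_lt_iff_lt_add,
    lt_div_iff₀ hgar, div_lt_iff₀ hgar] at h5
  rw [Real.dist_eq, abs_lt, sub_zero] at hr1 hr2
  rw [lt_div_iff₀ hgr, div_lt_iff₀ hgr] at hr1 hr2
  rw [Real.dist_eq, abs_lt, lt_sub_iff_add_lt, sub_lt_iff_lt_add, lt_div_iff₀ hgr,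
    div_lt_iff₀ hgr]
  constructor <;> nlinarith

theorem tendsto_one_sub_left : Tendsto (fun r : ℝ => 1 - r) (𝓝[<] 1) (𝓝[>] 0) := by
  refine tendsto_nhdsWithin_iff.2 ⟨?_, ?_⟩
  · have : Tendsto (fun r : ℝ => 1 - r) (𝓝 1) (𝓝 (1 - 1)) := (continuous_sub_left 1).tendsto 1
    rw [sub_self] at this
    exact this.mono_left nhdsWithin_le_nhds
  · filter_upwards [self_mem_nhdsWithin] with r hr
    exact sub_pos.2 (mem_Iio.1 hr)

theorem tendsto_left_of_continuous {f : ℝ → ℝ} (hf : Continuous f) :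
    Tendsto f (𝓝[<] 1) (𝓝 (f 1)) := (hf.tendsto 1).mono_left nhdsWithin_le_nhds

/-- If `θ = r d/dr`, a solution of `(1 - r²) θH + (a + (a - 2m) r²) H = R` with `m < a` has the
limit `R(1) / (2 (a - m))` at `1`: with the integrating factor `μ = r^a (1 - r²)^{-(a - m)}`,
which is unbounded at `1`, write `H = (μ H) / μ` and apply L'Hôpital's rule. -/
theorem ode_tendsto {a m : ℕ} (ham : m < a) {H H1 R : ℝ → ℝ} {l : ℝ}
    (hH : ∀ r ∈ Ioo (0 : ℝ) 1, HasDerivAt H (H1 r / r) r)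
    (heq : ∀ r ∈ Ioo (0 : ℝ) 1,
      (1 - r ^ 2) * H1 r + ((a : ℝ) * (1 + r ^ 2) - 2 * m * r ^ 2) * H r = R r)
    (hR : Tendsto R (𝓝[<] 1) (𝓝 l)) :
    ∃ l', Tendsto H (𝓝[<] 1) (𝓝 l') := by
  obtain ⟨b, rfl⟩ : ∃ b, a = m + (b + 1) := ⟨a - m - 1, by omega⟩
  set c : ℝ → ℝ := fun r => ((m + (b + 1) : ℕ) : ℝ) * (1 + r ^ 2) - 2 * m * r ^ 2 with hc
  have hcpos : ∀ r ∈ Ioo (0 : ℝ) 1, 0 < c r := by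
    intro r hr
    have : c r = m * (1 - r ^ 2) + (b + 1) * (1 + r ^ 2) := by simp only [hc]; push_cast; ring
    rw [this]
    have h1 : 0 < 1 - r ^ 2 := by nlinarith [hr.1, hr.2]
    positivity
  set μ : ℝ → ℝ := fun r => r ^ (m + (b + 1)) * ((1 - r ^ 2)⁻¹) ^ (b + 1) with hμ
  have hμpos : ∀ r ∈ Ioo (0 : ℝ) 1, 0 < μ r := by
    intro r hr
    have h1 : 0 < 1 - r ^ 2 := by nlinarith [hr.1, hr.2]
    have := hr.1
    simp only [hμ]; positivity
  have hμd : ∀ r ∈ Ioo (0 : ℝ) 1, HasDerivAt μ (μ r * c r / ((1 - r ^ 2) * r)) r := by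
    intro r hr
    have h1 : 1 - r ^ 2 ≠ 0 := by nlinarith [hr.1, hr.2]
    have hr0 : r ≠ 0 := hr.1.ne'
    have hd : HasDerivAt (fun r : ℝ => (1 - r ^ 2)⁻¹) (-(-(2 * r)) / (1 - r ^ 2) ^ 2) r := by
      have : HasDerivAt (fun r : ℝ => 1 - r ^ 2) (-(2 * r)) r := by
        simpa using (hasDerivAt_pow 2 r).const_sub 1
      exact this.inv h1
    have := (hasDerivAt_pow (m + (b + 1)) r).mul (hd.pow (b + 1))
    refine this.congr_deriv ?_
    simp only [hμ, hc, Pi.pow_apply]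
    rw [show m + (b + 1) - 1 = m + b from by omega, Nat.add_sub_cancel]
    push_cast
    rw [pow_succ ((1 - r ^ 2)⁻¹) b]
    field_simp
    ring
  have hμtop : Tendsto μ (𝓝[<] 1) atTop := by
    have h1 : Tendsto (fun r : ℝ => (1 - r ^ 2)⁻¹) (𝓝[<] 1) atTop := by
      refine tendsto_inv_nhdsGT_zero.comp (tendsto_nhdsWithin_iff.2 ⟨?_, ?_⟩)
      · have := tendsto_left_of_continuous (f := fun r => 1 - r ^ 2) (by fun_prop)
        rwa [one_pow, sub_self] at this
      · filter_upwards [Ioo_mem_nhdsLT one_pos] with r hr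
        have := hr.1
        have := hr.2
        simp only [mem_Ioi]; nlinarith
    have h2 := (tendsto_pow_atTop (Nat.succ_ne_zero b)).comp h1
    have h3 := tendsto_left_of_continuous (f := fun r : ℝ => r ^ (m + (b + 1))) (by fun_prop)
    exact h3.pos_mul_atTop (by simp) h2
  have hfin := tendsto_div_of_deriv (f := fun r => μ r * H r) (g := μ)
    (f' := fun r => μ r * R r / ((1 - r ^ 2) * r)) (l := l / c 1) ?_ hμd ?_ hμtop ?_
  · refine ⟨_, hfin.congr' ?_⟩
    filter_upwards [Ioo_mem_nhdsLT one_pos] with r hr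
    have := (hμpos r hr).ne'
    field_simp
  · intro r hr
    refine ((hμd r hr).mul (hH r hr)).congr_deriv ?_
    rw [← heq r hr]
    have h1 : 1 - r ^ 2 ≠ 0 := by nlinarith [hr.1, hr.2]
    have hr0 : r ≠ 0 := hr.1.ne'
    simp only [hc]
    field_simp
    ring
  · intro r hr
    have h1 : 0 < 1 - r ^ 2 := by nlinarith [hr.1, hr.2]
    have := hμpos r hr
    have := hcpos r hr
    have := hr.1
    positivity
  · have h1 := hR.div (tendsto_left_of_continuous (f := c) (by fun_prop)) (by
      simp only [hc]; push_cast; ring_nf; positivity)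
    refine h1.congr' ?_
    filter_upwards [Ioo_mem_nhdsLT one_pos] with r hr
    have h1 : 1 - r ^ 2 ≠ 0 := by nlinarith [hr.1, hr.2]
    have h2 := (hμpos r hr).ne'
    have h3 := (hcpos r hr).ne'
    have hr0 : r ≠ 0 := hr.1.ne'
    simp only [Pi.div_apply]
    field_simp

/-- In the critical case `m = a` of `ode_tendsto` the integrating factor is `r^a`, and the
solution grows at most like `log (1 / (1 - r))`. -/
theorem ode_log {a : ℕ} {H H1 R : ℝ → ℝ} {l : ℝ}
    (hH : ∀ r ∈ Ioo (0 : ℝ) 1, HasDerivAt H (H1 r / r) r)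
    (heq : ∀ r ∈ Ioo (0 : ℝ) 1,
      (1 - r ^ 2) * H1 r + ((a : ℝ) * (1 + r ^ 2) - 2 * a * r ^ 2) * H r = R r)
    (hR : Tendsto R (𝓝[<] 1) (𝓝 l)) :
    ∃ l', Tendsto (fun r => H r / Real.log (1 / (1 - r))) (𝓝[<] 1) (𝓝 l') := by
  have hlog : Tendsto (fun r : ℝ => Real.log (1 / (1 - r))) (𝓝[<] 1) atTop := by
    simp only [one_div]
    exact Real.tendsto_log_atTop.comp (tendsto_inv_nhdsGT_zero.comp tendsto_one_sub_left)
  have h := tendsto_div_of_deriv (f := fun r => r ^ a * H r)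
    (g := fun r => Real.log (1 / (1 - r)))
    (f' := fun r => r ^ a * R r / ((1 - r ^ 2) * r)) (g' := fun r => 1 / (1 - r))
    (l := l / 2) ?_ ?_ ?_ hlog ?_
  · have h2 := h.div (tendsto_left_of_continuous (f := fun r => r ^ a) (by fun_prop)) (by simp)
    refine ⟨_, h2.congr' ?_⟩
    filter_upwards [Ioo_mem_nhdsLT one_pos] with r hr
    have hr0 : r ≠ 0 := hr.1.ne'
    simp only [Pi.div_apply]
    rw [div_div, mul_comm (Real.log _), ← div_div, mul_div_cancel_left₀ _ (by positivity)]
  · intro r hr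
    have h1 : 1 - r ^ 2 ≠ 0 := by nlinarith [hr.1, hr.2]
    have hr0 : r ≠ 0 := hr.1.ne'
    refine ((hasDerivAt_pow a r).mul (hH r hr)).congr_deriv ?_
    rw [← heq r hr]
    rcases a with _ | a
    · simp; field_simp
    · rw [Nat.add_sub_cancel]
      field_simp
      ring
  · intro r hr
    have h1 : 1 - r ≠ 0 := by linarith [hr.2]
    have h2 : HasDerivAt (fun r : ℝ => -Real.log (1 - r)) (-(-1 / (1 - r))) r :=
      (((hasDerivAt_id r).const_sub 1).log h1).neg
    refine (h2.congr_deriv (by ring)).congr_of_eventuallyEq (Eventually.of_forall fun x => ?_)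
    simp [Real.log_inv]
  · intro r hr
    have : 0 < 1 - r := sub_pos.2 hr.2
    positivity
  · have h1 := ((tendsto_left_of_continuous (f := fun r => r ^ a) (by fun_prop)).mul hR).div
      (tendsto_left_of_continuous (f := fun r => (1 + r) * r) (by fun_prop)) (by norm_num)
    rw [one_pow, one_mul, show ((1 : ℝ) + 1) * 1 = 2 by norm_num] at h1
    refine h1.congr' ?_
    filter_upwards [Ioo_mem_nhdsLT one_pos] with r hr
    have h1 : 1 - r ≠ 0 := by linarith [hr.2]
    have h3 : 1 + r ≠ 0 := by linarith [hr.1]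
    have h2 : 1 - r ^ 2 = (1 - r) * (1 + r) := by ring
    have hr0 : r ≠ 0 := hr.1.ne'
    simp only [Pi.div_apply]
    rw [h2]
    field_simp

theorem tendsto_one_sub_sq_mul_log :
    Tendsto (fun r : ℝ => (1 - r ^ 2) * Real.log (1 / (1 - r))) (𝓝[<] 1) (𝓝 0) := by
  have h1 := tendsto_left_of_continuous (f := fun r => -((1 - r) * Real.log (1 - r)) * (1 + r))
    (((Real.continuous_mul_log.comp (continuous_sub_left 1)).neg).mul (continuous_const_add 1))
  simp only [sub_self, zero_mul, neg_zero] at h1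
  refine h1.congr fun r => ?_
  simp only [one_div, Real.log_inv]
  ring

/-! ### Integration over the sphere -/

/-- Finiteness needs no knowledge of the Hausdorff measure of the sphere: if that were `0` or `∞`,
the conventions of `ℝ≥0∞` would make `sphMeasure n` the zero measure. -/
instance (n : ℕ) : IsFiniteMeasure (sphMeasure n) := by
  refine ⟨?_⟩
  rw [sphMeasure, Measure.smul_apply, Measure.restrict_apply_univ, smul_eq_mul]
  exact (ENNReal.inv_mul_le_one _).trans_lt ENNReal.one_lt_top

theorem ae_mem_sphere (n : ℕ) : ∀ᵐ ζ ∂(sphMeasure n), ζ ∈ sphere (0 : E n) 1 :=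
  Measure.ae_smul_measure (ae_restrict_mem isClosed_sphere.measurableSet) _

theorem restrict_sphMeasure (n : ℕ) :
    (sphMeasure n).restrict (sphere (0 : E n) 1) = sphMeasure n :=
  Measure.restrict_eq_self_of_ae_mem (ae_mem_sphere n)

theorem aesm_sph {n : ℕ} {f : E n → ℝ} (hf : ContinuousOn f (sphere 0 1)) :
    AEStronglyMeasurable f (sphMeasure n) := by
  rw [← restrict_sphMeasure]
  exact hf.aestronglyMeasurable isClosed_sphere.measurableSet

theorem integrable_sph {n : ℕ} {f : E n → ℝ} (hf : ContinuousOn f (sphere 0 1)) :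
    Integrable f (sphMeasure n) := by
  obtain ⟨C, hC⟩ := (isCompact_sphere (0 : E n) 1).exists_bound_of_continuousOn hf
  refine Integrable.of_bound (aesm_sph hf) C ?_
  filter_upwards [ae_mem_sphere n] with ζ hζ using hC ζ hζ

theorem integral_sph_congr {n : ℕ} {f g : E n → ℝ} (h : ∀ ζ ∈ sphere (0 : E n) 1, f ζ = g ζ) :
    ∫ ζ, f ζ ∂(sphMeasure n) = ∫ ζ, g ζ ∂(sphMeasure n) := by
  refine integral_congr_ae ?_
  filter_upwards [ae_mem_sphere n] with ζ hζ using h ζ hζ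

/-- Differentiation under the integral over the sphere; compactness of the sphere supplies the
dominating constant. -/
theorem hasDerivAt_integral_sph {n : ℕ} {U : Set ℝ} (hU : IsOpen U) {g g' : ℝ → E n → ℝ}
    (hg : ∀ t ∈ U, ContinuousOn (g t) (sphere 0 1))
    (hg' : ContinuousOn (Function.uncurry g') (U ×ˢ sphere 0 1))
    (hd : ∀ t ∈ U, ∀ ζ ∈ sphere (0 : E n) 1, HasDerivAt (fun s => g s ζ) (g' t ζ) t)
    {t : ℝ} (ht : t ∈ U) :
    HasDerivAt (fun s => ∫ ζ, g s ζ ∂(sphMeasure n)) (∫ ζ, g' t ζ ∂(sphMeasure n)) t := by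
  obtain ⟨ε, hε, hεU⟩ := Metric.nhds_basis_closedBall.mem_iff.1 (hU.mem_nhds ht)
  obtain ⟨C, hC⟩ := ((isCompact_closedBall t ε).prod
    (isCompact_sphere (0 : E n) 1)).exists_bound_of_continuousOn
      (hg'.mono (prod_mono hεU Subset.rfl))
  refine (hasDerivAt_integral_of_dominated_loc_of_deriv_le (s := closedBall t ε)
    (bound := fun _ => C) (closedBall_mem_nhds t hε) ?_ (integrable_sph (hg t ht)) ?_ ?_
    (integrable_const _) ?_).2
  · filter_upwards [hU.mem_nhds ht] with s hs using aesm_sph (hg s hs)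
  · refine aesm_sph ?_
    exact hg'.comp (f := fun ζ => (t, ζ)) (by fun_prop) fun ζ hζ => ⟨ht, hζ⟩
  · filter_upwards [ae_mem_sphere n] with ζ hζ s hs using hC (s, ζ) ⟨hs, hζ⟩
  · filter_upwards [ae_mem_sphere n] with ζ hζ s hs using hd s (hεU hs) ζ hζ

theorem integral_sph_isometry {n : ℕ} (e : E n ≃ₗᵢ[ℝ] E n) (f : E n → ℝ) :
    ∫ ζ, f (e ζ) ∂(sphMeasure n) = ∫ ζ, f ζ ∂(sphMeasure n) := by
  have h1 := (e.toIsometryEquiv.measurePreserving_hausdorffMeasure ((n : ℝ) - 1)).restrict_preimage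
    (s := sphere (0 : E n) 1) isClosed_sphere.measurableSet
  have h2 : (e.toIsometryEquiv : E n → E n) ⁻¹' (sphere (0 : E n) 1) = sphere 0 1 := by
    ext x; simp
  rw [h2] at h1
  exact (h1.smul_measure ((μH[(n : ℝ) - 1] (sphere (0 : E n) 1))⁻¹)).integral_comp
    e.toHomeomorph.measurableEmbedding f

/-! ### Linear vector fields and rotations -/

/-- The first-order operator `v ↦ Σ (A x)_i ∂_i v` given by the linear vector field `A`. The
identity gives `N`, and the infinitesimal rotations give the `L_{i,j}`. -/
def linOp {n : ℕ} (A : E n →L[ℝ] E n) (v : E n → ℝ) : E n → ℝ := fun x => fderiv ℝ v x (A x)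

theorem NOp_eq {n : ℕ} (v : E n → ℝ) : NOp n v = linOp (ContinuousLinearMap.id ℝ (E n)) v := rfl

/-- The infinitesimal rotation `x ↦ x_i e_j - x_j e_i`. -/
def rotCLM {n : ℕ} (i j : Fin n) : E n →L[ℝ] E n :=
  (EuclideanSpace.proj i : E n →L[ℝ] ℝ).smulRight (EuclideanSpace.single j (1 : ℝ)) -
    (EuclideanSpace.proj j : E n →L[ℝ] ℝ).smulRight (EuclideanSpace.single i (1 : ℝ))

theorem rotCLM_apply {n : ℕ} (i j : Fin n) (x : E n) :
    rotCLM i j x = x i • EuclideanSpace.single j (1 : ℝ) - x j • EuclideanSpace.single i (1 : ℝ) := by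
  simp [rotCLM]

theorem rotOp_eq {n : ℕ} (i j : Fin n) (v : E n → ℝ) : rotOp n i j v = linOp (rotCLM i j) v := by
  ext x
  simp [rotOp, linOp, rotCLM_apply]

theorem contDiffOn_linOp {n : ℕ} (A : E n →L[ℝ] E n) {v : E n → ℝ} {U : Set (E n)}
    (hU : IsOpen U) (hv : ContDiffOn ℝ ∞ v U) : ContDiffOn ℝ ∞ (linOp A v) U :=
  (hv.fderiv_of_isOpen hU (by simp)).clm_apply A.contDiff.contDiffOn

theorem contDiffOn_NOp {n : ℕ} {v : E n → ℝ} (hv : ContDiffOn ℝ ∞ v (ball 0 1)) :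
    ContDiffOn ℝ ∞ (NOp n v) (ball 0 1) :=
  contDiffOn_linOp (ContinuousLinearMap.id ℝ (E n)) isOpen_ball hv

theorem contDiffOn_rotOp {n : ℕ} (i j : Fin n) {v : E n → ℝ} (hv : ContDiffOn ℝ ∞ v (ball 0 1)) :
    ContDiffOn ℝ ∞ (rotOp n i j v) (ball 0 1) := by
  rw [rotOp_eq]
  exact contDiffOn_linOp _ isOpen_ball hv

theorem contDiff_linOp {n : ℕ} (A : E n →L[ℝ] E n) {v : E n → ℝ}
    (hv : ContDiff ℝ ∞ v) : ContDiff ℝ ∞ (linOp A v) :=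
  contDiffOn_univ.1 (contDiffOn_linOp A isOpen_univ hv.contDiffOn)

theorem rotCLM_skew {n : ℕ} (i j : Fin n) : rotCLM i j ∈ skewAdjoint (E n →L[ℝ] E n) := by
  rw [skewAdjoint.mem_iff, ContinuousLinearMap.star_eq_adjoint]
  symm
  rw [ContinuousLinearMap.eq_adjoint_iff]
  intro x y
  simp [rotCLM_apply, inner_sub_left, inner_sub_right, inner_smul_left, inner_smul_right,
    EuclideanSpace.inner_single_left, EuclideanSpace.inner_single_right]
  ring

/-- The derivative of a function along an infinitesimal rotation has mean zero: the one-parameter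
group `exp (t A)` preserves the surface measure, so `t ↦ ∫ f (exp (t A) ζ) dσ(ζ)` is constant. -/
theorem integral_linOp_skew {n : ℕ} {A : E n →L[ℝ] E n}
    (hA : A ∈ skewAdjoint (E n →L[ℝ] E n)) {f : E n → ℝ} {U : Set (E n)} (hU : IsOpen U)
    (hSU : sphere 0 1 ⊆ U) (hf : ContDiffOn ℝ 1 f U) :
    ∫ ζ, linOp A f ζ ∂(sphMeasure n) = 0 := by
  let +nondep : NormedAlgebra ℚ (E n →L[ℝ] E n) := .restrictScalars ℚ ℝ _
  have hu : ∀ t : ℝ, NormedSpace.exp (t • A) ∈ unitary (E n →L[ℝ] E n) := fun t =>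
    NormedSpace.exp_mem_unitary_of_mem_skewAdjoint (skewAdjoint.smul_mem t hA)
  have hnorm : ∀ t : ℝ, ∀ ζ ∈ sphere (0 : E n) 1,
      NormedSpace.exp (t • A) ζ ∈ sphere (0 : E n) 1 := by
    intro t ζ hζ
    have := (Unitary.linearIsometryEquiv ⟨_, hu t⟩).norm_map ζ
    rw [mem_sphere_zero_iff_norm] at hζ ⊢
    rw [← hζ]
    exact this
  have hder : ∀ t : ℝ, HasDerivAt (fun t : ℝ => NormedSpace.exp (t • A))
      (A * NormedSpace.exp (t • A)) t := fun t => hasDerivAt_exp_smul_const' A t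
  have hcont : Continuous fun t : ℝ => NormedSpace.exp (t • A) :=
    continuous_iff_continuousAt.2 fun t => (hder t).continuousAt
  have hcl : ContinuousOn (linOp A f) (sphere 0 1) :=
    (((hf.continuousOn_fderiv_of_isOpen hU le_rfl).clm_apply A.continuous.continuousOn)).mono hSU
  have h := hasDerivAt_integral_sph (n := n) isOpen_univ
    (g := fun t ζ => f (NormedSpace.exp (t • A) ζ))
    (g' := fun t ζ => linOp A f (NormedSpace.exp (t • A) ζ)) ?_ ?_ ?_ (mem_univ 0)
  · have hc : (fun t : ℝ => ∫ ζ, f (NormedSpace.exp (t • A) ζ) ∂(sphMeasure n)) =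
        fun _ => ∫ ζ, f ζ ∂(sphMeasure n) := by
      ext t
      exact integral_sph_isometry (Unitary.linearIsometryEquiv ⟨_, hu t⟩) f
    rw [hc] at h
    have := h.unique (hasDerivAt_const 0 _)
    have h0 : NormedSpace.exp ((0 : ℝ) • A) = 1 := by
      rw [show (0 : ℝ) • A = 0 from zero_smul ℝ A, NormedSpace.exp_zero]
    rw [h0] at this
    exact this
  · intro t _
    exact (hf.continuousOn.mono hSU).comp (by fun_prop) (hnorm t)
  · refine hcl.comp (f := fun p : ℝ × E n => NormedSpace.exp (p.1 • A) p.2) ?_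
      fun p hp => hnorm p.1 p.2 hp.2
    exact ((hcont.comp continuous_fst).clm_apply continuous_snd).continuousOn
  · intro t _ ζ hζ
    have h1 := (hder t).clm_apply (hasDerivAt_const t ζ)
    have h2 := ((hf.contDiffAt (hU.mem_nhds (hSU (hnorm t ζ hζ)))).differentiableAt
      one_ne_zero).hasFDerivAt
    have h3 := h2.comp_hasDerivAt t h1
    refine h3.congr_deriv ?_
    simp [linOp]

/-! ### Pairings on spheres -/

/-- The pairing `∫ v(rζ) Φ(ζ) dσ(ζ)` as a function of the radius `r`. -/
def sphI {n : ℕ} (v Φ : E n → ℝ) (r : ℝ) : ℝ := ∫ ζ, v (r • ζ) * Φ ζ ∂(sphMeasure n)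

theorem smul_mem_ball {n : ℕ} {r : ℝ} (hr : r ∈ Ioo (0 : ℝ) 1) {ζ : E n}
    (hζ : ζ ∈ sphere (0 : E n) 1) : r • ζ ∈ ball (0 : E n) 1 := by
  rw [mem_sphere_zero_iff_norm] at hζ
  rw [mem_ball_zero_iff, norm_smul, hζ, mul_one, Real.norm_of_nonneg hr.1.le]
  exact hr.2

theorem continuousOn_smul_mul {n : ℕ} {v Φ : E n → ℝ} (hv : ContinuousOn v (ball 0 1))
    (hΦ : Continuous Φ) {r : ℝ} (hr : r ∈ Ioo (0 : ℝ) 1) :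
    ContinuousOn (fun ζ => v (r • ζ) * Φ ζ) (sphere 0 1) :=
  (hv.comp (by fun_prop) fun _ hζ => smul_mem_ball hr hζ).mul hΦ.continuousOn

/-- The operator `N` acts on pairings as `r d/dr`. -/
theorem hasDerivAt_sphI {n : ℕ} {v Φ : E n → ℝ} (hv : ContDiffOn ℝ ∞ v (ball 0 1))
    (hΦ : ContDiff ℝ ∞ Φ) {r : ℝ} (hr : r ∈ Ioo (0 : ℝ) 1) :
    HasDerivAt (sphI v Φ) (sphI (NOp n v) Φ r / r) r := by
  have hNv : ContinuousOn (NOp n v) (ball 0 1) := (contDiffOn_NOp hv).continuousOn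
  have h := hasDerivAt_integral_sph (n := n) (isOpen_Ioo (a := (0 : ℝ)) (b := 1))
    (g := fun t ζ => v (t • ζ) * Φ ζ) (g' := fun t ζ => NOp n v (t • ζ) * Φ ζ / t)
    (fun t ht => continuousOn_smul_mul hv.continuousOn hΦ.continuous ht) ?_ ?_ hr
  · rw [integral_div] at h
    exact h
  · refine ContinuousOn.div (ContinuousOn.mul ?_ ?_) (by fun_prop) fun p hp => hp.1.1.ne'
    · exact hNv.comp (f := fun p : ℝ × E n => p.1 • p.2) (by fun_prop)
        fun p hp => smul_mem_ball hp.1 hp.2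
    · exact (hΦ.continuous.comp continuous_snd).continuousOn
  · intro t ht ζ hζ
    have h2 := ((hv.contDiffAt (isOpen_ball.mem_nhds (smul_mem_ball ht hζ))).differentiableAt
      (by simp)).hasFDerivAt
    have h3 := (h2.comp_hasDerivAt t ((hasDerivAt_id t).smul_const ζ)).mul_const (Φ ζ)
    refine h3.congr_deriv ?_
    have := ht.1.ne'
    simp only [NOp, map_smul, smul_eq_mul, one_smul]
    field_simp

/-- Integration by parts on the sphere for the rotation operators. -/
theorem sphI_rot {n : ℕ} (i j : Fin n) {v Φ : E n → ℝ} (hv : ContDiffOn ℝ ∞ v (ball 0 1))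
    (hΦ : ContDiff ℝ ∞ Φ) {r : ℝ} (hr : r ∈ Ioo (0 : ℝ) 1) :
    sphI (rotOp n i j v) Φ r = - sphI v (linOp (rotCLM i j) Φ) r := by
  set U : Set (E n) := (fun ζ => r • ζ) ⁻¹' ball 0 1 with hUdef
  have hU : IsOpen U := isOpen_ball.preimage (continuous_const_smul r)
  have hvU : ContDiffOn ℝ ∞ (fun ζ => v (r • ζ)) U :=
    hv.comp (contDiff_const_smul r).contDiffOn fun _ h => h
  have hSU : sphere (0 : E n) 1 ⊆ U := fun ζ hζ => smul_mem_ball hr hζ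
  have h0 := integral_linOp_skew (rotCLM_skew i j) hU hSU
    ((hvU.mul hΦ.contDiffOn).of_le (by simp))
  have hd : ∀ ζ ∈ sphere (0 : E n) 1,
      linOp (rotCLM i j) (fun ζ => v (r • ζ) * Φ ζ) ζ =
        rotOp n i j v (r • ζ) * Φ ζ + v (r • ζ) * linOp (rotCLM i j) Φ ζ := by
    intro ζ hζ
    have h2 := ((hv.contDiffAt (isOpen_ball.mem_nhds (smul_mem_ball hr hζ))).differentiableAt
      (by simp)).hasFDerivAt
    have h3 : HasFDerivAt (fun ζ : E n => r • ζ) (r • ContinuousLinearMap.id ℝ (E n)) ζ :=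
      (hasFDerivAt_id ζ).const_smul r
    have h4 := (h2.comp ζ h3).mul (hΦ.differentiable (by simp) ζ).hasFDerivAt
    have h5 : fderiv ℝ (fun ζ => v (r • ζ) * Φ ζ) ζ = _ := h4.fderiv
    rw [rotOp_eq]
    simp only [linOp, h5]
    simp
    ring
  rw [integral_sph_congr hd, integral_add] at h0
  · exact eq_neg_of_add_eq_zero_left h0
  · refine integrable_sph (continuousOn_smul_mul ?_ hΦ.continuous hr)
    exact (contDiffOn_rotOp i j hv).continuousOn
  · exact integrable_sph (continuousOn_smul_mul hv.continuousOn (contDiff_linOp _ hΦ).continuous hr)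

/-! ### Polar coordinates and the radial equation -/

/-- The square of a first-order operator in terms of the Hessian of `v`. -/
theorem linOp_linOp {n : ℕ} (A : E n →L[ℝ] E n) {v : E n → ℝ} {U : Set (E n)}
    (hU : IsOpen U) (hv : ContDiffOn ℝ ∞ v U) {x : E n} (hx : x ∈ U) :
    linOp A (linOp A v) x = fderiv ℝ (fderiv ℝ v) x (A x) (A x) + fderiv ℝ v x (A (A x)) := by
  have h1 : DifferentiableAt ℝ (fderiv ℝ v) x :=
    ((hv.fderiv_of_isOpen (m := ∞) hU (by simp)).contDiffAt (hU.mem_nhds hx)).differentiableAt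
      (by simp)
  have h2 : fderiv ℝ (linOp A v) x = _ := (h1.hasFDerivAt.clm_apply A.hasFDerivAt).fderiv
  rw [linOp, h2]
  simp
  ring

/-- The Laplacian in polar coordinates: the spherical part is half of the sum of the squares of all
the `L_{i,j}`, each unordered pair being counted twice. -/
theorem lap_polar {n : ℕ} {v : E n → ℝ} {U : Set (E n)}
    (hU : IsOpen U) (hv : ContDiffOn ℝ ∞ v U) {x : E n} (hx : x ∈ U) :
    ‖x‖ ^ 2 * lap n v x = (1 / 2) * ∑ i : Fin n, ∑ j : Fin n, rotOp n i j (rotOp n i j v) x +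
      NOp n (NOp n v) x + ((n : ℝ) - 2) * NOp n v x := by
  have hsymm : IsSymmSndFDerivAt ℝ v x :=
    (hv.contDiffAt (hU.mem_nhds hx)).isSymmSndFDerivAt
      (by simp only [minSmoothness_of_isRCLikeNormedField]; exact WithTop.coe_le_coe.2 le_top)
  have h1 : DifferentiableAt ℝ (fderiv ℝ v) x :=
    ((hv.fderiv_of_isOpen (m := ∞) hU (by simp)).contDiffAt (hU.mem_nhds hx)).differentiableAt
      (by simp)
  set p := fderiv ℝ v x with hp
  set B := fderiv ℝ (fderiv ℝ v) x with hB
  set e : Fin n → E n := fun i => EuclideanSpace.single i (1 : ℝ) with he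
  have hxe : x = ∑ i, x i • e i := by
    ext k
    simp [he, Pi.single_apply]
  have hlap : lap n v x = ∑ i, B (e i) (e i) := by
    refine Finset.sum_congr rfl fun i _ => ?_
    rw [(h1.hasFDerivAt.clm_apply (hasFDerivAt_const _ _)).fderiv]
    simp [hB, he]
  have hN : NOp n v x = p x := rfl
  have hNN : NOp n (NOp n v) x = B x x + p x := by
    rw [NOp_eq, NOp_eq, linOp_linOp _ hU hv hx]; rfl
  have hpx : p x = ∑ i, x i * p (e i) := by
    conv_lhs => rw [hxe]
    simp
  have hs : ∀ i j, B (e i) (e j) = B (e j) (e i) := fun i j => hsymm _ _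
  have hBx : B x x = ∑ i, ∑ j, x i * x j * B (e i) (e j) := by
    conv_lhs => rw [hxe]
    simp only [map_sum, map_smul, sum_apply, smul_apply, smul_eq_mul, Finset.mul_sum, mul_assoc]
    exact Finset.sum_congr rfl fun i _ => Finset.sum_congr rfl fun j _ => by rw [hs]
  have hrot : ∀ i j, rotOp n i j (rotOp n i j v) x =
      x i ^ 2 * B (e j) (e j) - 2 * (x i * x j * B (e i) (e j)) + x j ^ 2 * B (e i) (e i) +
      ((if i = j then x i * p (e i) + x j * p (e j) else 0) - x j * p (e j) - x i * p (e i)) := by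
    intro i j
    rw [rotOp_eq, rotOp_eq, linOp_linOp _ hU hv hx, rotCLM_apply, rotCLM_apply]
    have := hs i j
    change B (x i • e j - x j • e i) (x i • e j - x j • e i) +
      p ((x i • e j - x j • e i) i • e j - (x i • e j - x j • e i) j • e i) = _
    simp only [map_sub, map_smul, sub_apply, smul_apply, smul_eq_mul, PiLp.sub_apply,
      PiLp.smul_apply, this]
    by_cases hij : i = j
    · subst hij
      simp [he]; ring
    · simp [he, hij, Ne.symm hij]; ring
  have hnorm : ‖x‖ ^ 2 = ∑ i, x i ^ 2 := EuclideanSpace.real_norm_sq_eq x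
  rw [hlap, hNN, hN, hBx, hpx, hnorm]
  simp only [hrot, Finset.sum_add_distrib, Finset.sum_sub_distrib, Finset.sum_ite_eq,
    Finset.mem_univ, if_true, ← Finset.mul_sum, ← Finset.sum_mul, Finset.sum_const,
    Finset.card_univ, Fintype.card_fin, nsmul_eq_mul]
  have hn : ∑ i, x i * ((n : ℝ) * p (e i)) = n * ∑ i, x i * p (e i) := by
    rw [Finset.mul_sum]
    exact Finset.sum_congr rfl fun i _ => by ring
  rw [hn]
  ring

/-- The spherical Laplacian `½ Σ L_{i,j}²` of a test function. The factor `½` corrects for counting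
each unordered pair twice; the terms with `i = j` vanish. -/
def sphLap {n : ℕ} (Φ : E n → ℝ) : E n → ℝ := fun x =>
  (1 / 2) * ∑ i : Fin n, ∑ j : Fin n, linOp (rotCLM i j) (linOp (rotCLM i j) Φ) x

theorem contDiff_sphLap {n : ℕ} {Φ : E n → ℝ} (hΦ : ContDiff ℝ ∞ Φ) : ContDiff ℝ ∞ (sphLap Φ) :=
  contDiff_const.mul (ContDiff.sum fun i _ => ContDiff.sum fun j _ =>
    contDiff_linOp (rotCLM i j) (contDiff_linOp (rotCLM i j) hΦ))

/-- The equation `Du = 0` in polar coordinates, integrated against a test function. -/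
theorem radial_ode {n : ℕ} {u Φ : E n → ℝ} (hu : ContDiffOn ℝ ∞ u (ball (0 : E n) 1))
    (hH : HHarmonic n u) (hΦ : ContDiff ℝ ∞ Φ) {r : ℝ} (hr : r ∈ Ioo (0 : ℝ) 1) :
    (1 - r ^ 2) * sphI (NOp n (NOp n u)) Φ r + ((n : ℝ) - 2) * (1 + r ^ 2) * sphI (NOp n u) Φ r
      + (1 - r ^ 2) * sphI u (sphLap Φ) r = 0 := by
  have hr1 : 1 - r ^ 2 ≠ 0 := by nlinarith [hr.1, hr.2]
  have hN := contDiffOn_NOp hu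
  have hNN := contDiffOn_NOp hN
  have hRR : ∀ i j, ContDiffOn ℝ ∞ (rotOp n i j (rotOp n i j u)) (ball 0 1) := fun i j =>
    contDiffOn_rotOp i j (contDiffOn_rotOp i j hu)
  have hint : ∀ {v Ψ : E n → ℝ}, ContDiffOn ℝ ∞ v (ball 0 1) → ContDiff ℝ ∞ Ψ →
      Integrable (fun ζ => v (r • ζ) * Ψ ζ) (sphMeasure n) := fun hv hΨ =>
    integrable_sph (continuousOn_smul_mul hv.continuousOn hΨ.continuous hr)
  have hadj : sphI u (sphLap Φ) r =
      ∑ i, ∑ j, (1 / 2) * sphI (rotOp n i j (rotOp n i j u)) Φ r := by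
    have h1 : ∀ i j, sphI (rotOp n i j (rotOp n i j u)) Φ r =
        sphI u (linOp (rotCLM i j) (linOp (rotCLM i j) Φ)) r := fun i j => by
      rw [sphI_rot i j (contDiffOn_rotOp i j hu) hΦ hr, sphI_rot i j hu (contDiff_linOp _ hΦ) hr, neg_neg]
    simp only [h1]
    simp only [sphI, sphLap]
    have h2 : ∀ ζ, u (r • ζ) * ((1 / 2) * ∑ i, ∑ j,
        linOp (rotCLM i j) (linOp (rotCLM i j) Φ) ζ) = ∑ i, ∑ j, (1 / 2) *
          (u (r • ζ) * linOp (rotCLM i j) (linOp (rotCLM i j) Φ) ζ) := fun ζ => by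
      simp only [← Finset.mul_sum]; ring
    simp only [h2]
    rw [integral_finsetSum _ fun i _ => integrable_finsetSum _ fun j _ =>
        (hint hu (contDiff_linOp _ (contDiff_linOp _ hΦ))).const_mul _]
    refine Finset.sum_congr rfl fun i _ => ?_
    rw [integral_finsetSum]
    · exact Finset.sum_congr rfl fun j _ => integral_const_mul _ _
    · exact fun j _ => (hint hu (contDiff_linOp _ (contDiff_linOp _ hΦ))).const_mul _
  have hpt : ∀ ζ ∈ sphere (0 : E n) 1,
      (1 - r ^ 2) * (NOp n (NOp n u) (r • ζ) * Φ ζ) +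
      ((n : ℝ) - 2) * (1 + r ^ 2) * (NOp n u (r • ζ) * Φ ζ) +
      (1 - r ^ 2) * ∑ i, ∑ j, (1 / 2) * (rotOp n i j (rotOp n i j u) (r • ζ) * Φ ζ) = 0 := by
    intro ζ hζ
    have hx := smul_mem_ball hr hζ
    have h1 := hH _ hx
    have h2 := lap_polar isOpen_ball hu hx
    have h3 : ‖r • ζ‖ = r := by
      rw [norm_smul, mem_sphere_zero_iff_norm.1 hζ, mul_one, Real.norm_of_nonneg hr.1.le]
    rw [h3] at h1 h2
    have h4 : (1 - r ^ 2) * lap n u (r • ζ) + 2 * ((n : ℝ) - 2) * Nder n u (r • ζ) = 0 := by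
      apply mul_left_cancel₀ hr1
      linear_combination h1
    have h5 : Nder n u (r • ζ) = NOp n u (r • ζ) := rfl
    rw [h5] at h4
    simp only [← Finset.mul_sum, ← Finset.sum_mul]
    linear_combination (r ^ 2 * Φ ζ) * h4 - (1 - r ^ 2) * Φ ζ * h2
  have h0 := integral_sph_congr hpt
  rw [integral_zero, integral_add, integral_add, integral_const_mul, integral_const_mul,
    integral_const_mul, integral_finsetSum] at h0
  · rw [hadj, ← h0]
    congr 2
    refine Finset.sum_congr rfl fun i _ => ?_
    rw [integral_finsetSum]
    · exact Finset.sum_congr rfl fun j _ => (integral_const_mul _ _).symm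
    · exact fun j _ => (hint (hRR i j) hΦ).const_mul _
  · exact fun i _ => integrable_finsetSum _ fun j _ => (hint (hRR i j) hΦ).const_mul _
  · exact (hint hNN hΦ).const_mul _
  · exact (hint hN hΦ).const_mul _
  · exact ((hint hNN hΦ).const_mul _).add ((hint hN hΦ).const_mul _)
  · exact (integrable_finsetSum _ fun i _ => integrable_finsetSum _ fun j _ =>
      (hint (hRR i j) hΦ).const_mul _).const_mul _

/-! ### Differentiating the radial equation -/

/-- Combinations of `h 0, …, h m, g 0, …, g m` with coefficients polynomial in `r²`. -/
inductive Comb (h g : ℕ → ℝ → ℝ) : ℕ → (ℝ → ℝ) → Prop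
  | left {m : ℕ} (j : ℕ) (hj : j ≤ m) : Comb h g m (h j)
  | right {m : ℕ} (j : ℕ) (hj : j ≤ m) : Comb h g m (g j)
  | add {m : ℕ} {p q : ℝ → ℝ} (hp : Comb h g m p) (hq : Comb h g m q) :
      Comb h g m (fun r => p r + q r)
  | smul {m : ℕ} {p : ℝ → ℝ} (c : ℝ) (hp : Comb h g m p) : Comb h g m (fun r => c * p r)
  | sq {m : ℕ} {p : ℝ → ℝ} (hp : Comb h g m p) : Comb h g m (fun r => r ^ 2 * p r)

theorem Comb.succ {h g : ℕ → ℝ → ℝ} {m : ℕ} {p : ℝ → ℝ} (hp : Comb h g m p) :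
    Comb h g (m + 1) p := by
  induction hp with
  | left j hj => exact .left j (hj.trans (Nat.le_succ _))
  | right j hj => exact .right j (hj.trans (Nat.le_succ _))
  | add _ _ h1 h2 => exact .add h1 h2
  | smul c _ h1 => exact .smul c h1
  | sq _ h1 => exact .sq h1

/-- If `r d/dr` shifts the indices of `h` and `g`, it raises the order of a combination by one. -/
theorem Comb.hasDerivAt {h g : ℕ → ℝ → ℝ}
    (hh : ∀ k, ∀ r ∈ Ioo (0 : ℝ) 1, HasDerivAt (h k) (h (k + 1) r / r) r)
    (hg : ∀ k, ∀ r ∈ Ioo (0 : ℝ) 1, HasDerivAt (g k) (g (k + 1) r / r) r)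
    {m : ℕ} {p : ℝ → ℝ} (hp : Comb h g m p) :
    ∃ q, Comb h g (m + 1) q ∧ ∀ r ∈ Ioo (0 : ℝ) 1, HasDerivAt p (q r / r) r := by
  induction hp with
  | left j hj => exact ⟨h (j + 1), .left _ (Nat.succ_le_succ hj), hh j⟩
  | right j hj => exact ⟨g (j + 1), .right _ (Nat.succ_le_succ hj), hg j⟩
  | add _ _ h1 h2 =>
    obtain ⟨q1, hq1, hd1⟩ := h1
    obtain ⟨q2, hq2, hd2⟩ := h2
    refine ⟨_, .add hq1 hq2, fun r hr => ?_⟩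
    rw [add_div]
    exact (hd1 r hr).add (hd2 r hr)
  | smul c _ h1 =>
    obtain ⟨q1, hq1, hd1⟩ := h1
    refine ⟨_, .smul c hq1, fun r hr => ?_⟩
    rw [mul_div_assoc]
    exact (hd1 r hr).const_mul c
  | sq hp1 h1 =>
    obtain ⟨q1, hq1, hd1⟩ := h1
    refine ⟨_, .add (.smul 2 (.sq hp1.succ)) (.sq hq1), fun r hr => ?_⟩
    refine ((hasDerivAt_pow 2 r).mul (hd1 r hr)).congr_deriv ?_
    have := hr.1.ne'
    field_simp
    push_cast
    ring

theorem Comb.tendsto {h g : ℕ → ℝ → ℝ} {m : ℕ}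
    (hh : ∀ j ≤ m, ∃ l, Tendsto (h j) (𝓝[<] 1) (𝓝 l))
    (hg : ∀ j ≤ m, ∃ l, Tendsto (g j) (𝓝[<] 1) (𝓝 l)) {p : ℝ → ℝ} (hp : Comb h g m p) :
    ∃ l, Tendsto p (𝓝[<] 1) (𝓝 l) := by
  induction hp with
  | left j hj => exact hh j hj
  | right j hj => exact hg j hj
  | add _ _ h1 h2 =>
    obtain ⟨l1, h1⟩ := h1
    obtain ⟨l2, h2⟩ := h2
    exact ⟨_, h1.add h2⟩
  | smul c _ h1 =>
    obtain ⟨l1, h1⟩ := h1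
    exact ⟨_, h1.const_mul c⟩
  | sq _ h1 =>
    obtain ⟨l1, h1⟩ := h1
    exact ⟨_, (tendsto_left_of_continuous (f := fun r => r ^ 2) (by fun_prop)).mul h1⟩

/-- Applying `θ^m`, `θ = r d/dr`, to the second-order radial equation gives a first-order equation
for `h (m + 1) = θ^(m+1) h`, whose right-hand side only involves derivatives of order at most `m`.
Each application of `θ` lowers the coefficient at `r = 1` by `2`. -/
theorem chain_eq {a : ℝ} {h g : ℕ → ℝ → ℝ}
    (hh : ∀ k, ∀ r ∈ Ioo (0 : ℝ) 1, HasDerivAt (h k) (h (k + 1) r / r) r)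
    (hg : ∀ k, ∀ r ∈ Ioo (0 : ℝ) 1, HasDerivAt (g k) (g (k + 1) r / r) r)
    (h0 : ∀ r ∈ Ioo (0 : ℝ) 1,
      (1 - r ^ 2) * h 2 r + a * (1 + r ^ 2) * h 1 r + (1 - r ^ 2) * g 0 r = 0) (m : ℕ) :
    ∃ R, Comb h g m R ∧ ∀ r ∈ Ioo (0 : ℝ) 1,
      (1 - r ^ 2) * h (m + 2) r + (a * (1 + r ^ 2) - 2 * m * r ^ 2) * h (m + 1) r = R r := by
  induction m with
  | zero =>
    refine ⟨_, .add (.smul (-1) (.right 0 le_rfl)) (.sq (.right 0 le_rfl)), fun r hr => ?_⟩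
    have := h0 r hr
    push_cast
    linear_combination this
  | succ m ih =>
    obtain ⟨R, hR, heq⟩ := ih
    obtain ⟨Q, hQ, hd⟩ := hR.hasDerivAt hh hg
    refine ⟨_, .add hQ (.smul (-(2 * a - 4 * m)) (.sq (.left (m + 1) le_rfl))), fun r hr => ?_⟩
    have hs : HasDerivAt (fun r : ℝ => r ^ 2) (2 * r) r := by simpa using hasDerivAt_pow 2 r
    have h1 := ((hs.const_sub 1).mul (hh (m + 2) r hr)).add
      ((((hs.const_add 1).const_mul a).sub (hs.const_mul (2 * (m : ℝ)))).mul (hh (m + 1) r hr))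
    have h2 := (hd r hr).congr_of_eventuallyEq
      (f₁ := fun r => (1 - r ^ 2) * h (m + 2) r +
        (a * (1 + r ^ 2) - 2 * m * r ^ 2) * h (m + 1) r) (by
        filter_upwards [isOpen_Ioo.mem_nhds hr] with s hs using heq s hs)
    have h3 := h1.unique h2
    have hr0 := hr.1.ne'
    field_simp at h3
    push_cast
    simp only [show m + 1 + 2 = m + 2 + 1 from rfl, show m + 1 + 1 = m + 2 from rfl] at h3 ⊢
    simp only [Pi.sub_apply] at h3
    linear_combination h3

/-! ### Normal derivatives of `H`-harmonic functions -/

theorem contDiffOn_iterate_NOp {n : ℕ} {v : E n → ℝ} (hv : ContDiffOn ℝ ∞ v (ball 0 1)) (k : ℕ) :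
    ContDiffOn ℝ ∞ ((NOp n)^[k] v) (ball 0 1) := by
  induction k with
  | zero => exact hv
  | succ k ih =>
    rw [Function.iterate_succ_apply']
    exact contDiffOn_NOp ih

theorem hasDerivAt_sphI_iterate {n : ℕ} {v Φ : E n → ℝ} (hv : ContDiffOn ℝ ∞ v (ball 0 1))
    (hΦ : ContDiff ℝ ∞ Φ) (k : ℕ) {r : ℝ} (hr : r ∈ Ioo (0 : ℝ) 1) :
    HasDerivAt (sphI ((NOp n)^[k] v) Φ) (sphI ((NOp n)^[k + 1] v) Φ r / r) r := by
  rw [Function.iterate_succ_apply']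
  exact hasDerivAt_sphI (contDiffOn_iterate_NOp hv k) hΦ hr

theorem sphI_chain {n : ℕ} (hn : 3 ≤ n) {u Φ : E n → ℝ}
    (hu : ContDiffOn ℝ ∞ u (ball (0 : E n) 1)) (hH : HHarmonic n u) (hΦ : ContDiff ℝ ∞ Φ)
    (m : ℕ) :
    ∃ R, Comb (fun k => sphI ((NOp n)^[k] u) Φ) (fun k => sphI ((NOp n)^[k] u) (sphLap Φ)) m R ∧
      ∀ r ∈ Ioo (0 : ℝ) 1, (1 - r ^ 2) * sphI ((NOp n)^[m + 2] u) Φ r +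
        (((n - 2 : ℕ) : ℝ) * (1 + r ^ 2) - 2 * m * r ^ 2) * sphI ((NOp n)^[m + 1] u) Φ r = R r := by
  refine chain_eq (fun k r hr => hasDerivAt_sphI_iterate hu hΦ k hr)
    (fun k r hr => hasDerivAt_sphI_iterate hu (contDiff_sphLap hΦ) k hr) (fun r hr => ?_) m
  rw [Nat.cast_sub (by omega)]
  exact radial_ode hu hH hΦ hr

/-- Below the critical order all normal derivatives of `u` have boundary distributions. -/
theorem tendsto_sphI_iterate {n : ℕ} (hn : 3 ≤ n) {u : E n → ℝ}
    (hu : ContDiffOn ℝ ∞ u (ball (0 : E n) 1)) (hH : HHarmonic n u)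
    (hbd : HasBoundaryDistribution n u) (k : ℕ) (hk : k ≤ n - 2) :
    ∀ Φ : E n → ℝ, ContDiff ℝ ∞ Φ →
      ∃ l, Tendsto (sphI ((NOp n)^[k] u) Φ) (𝓝[<] 1) (𝓝 l) := by
  induction k using Nat.strong_induction_on with
  | _ k ih =>
    intro Φ hΦ
    rcases k with _ | m
    · exact hbd Φ hΦ
    · obtain ⟨R, hR, heq⟩ := sphI_chain hn hu hH hΦ m
      obtain ⟨l, hl⟩ := hR.tendsto
        (fun j hj => ih j (Nat.lt_succ_of_le hj) (by omega) Φ hΦ)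
        (fun j hj => ih j (Nat.lt_succ_of_le hj) (by omega) _ (contDiff_sphLap hΦ))
      exact ode_tendsto (a := n - 2) (m := m) (by omega)
        (fun r hr => hasDerivAt_sphI_iterate hu hΦ (m + 1) hr) heq hl

/-- At the critical order `n - 1` the pairings divided by `log (1 / (1 - r))` have a limit. -/
theorem log_sphI_iterate {n : ℕ} (hn : 3 ≤ n) {u : E n → ℝ}
    (hu : ContDiffOn ℝ ∞ u (ball (0 : E n) 1)) (hH : HHarmonic n u)
    (hbd : HasBoundaryDistribution n u) {Φ : E n → ℝ} (hΦ : ContDiff ℝ ∞ Φ) :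
    ∃ l, Tendsto (fun r => sphI ((NOp n)^[n - 2 + 1] u) Φ r / Real.log (1 / (1 - r)))
      (𝓝[<] 1) (𝓝 l) := by
  obtain ⟨R, hR, heq⟩ := sphI_chain hn hu hH hΦ (n - 2)
  obtain ⟨l, hl⟩ := hR.tendsto
    (fun j hj => tendsto_sphI_iterate hn hu hH hbd j hj Φ hΦ)
    (fun j hj => tendsto_sphI_iterate hn hu hH hbd j hj _ (contDiff_sphLap hΦ))
  exact ode_log (a := n - 2) (fun r hr => hasDerivAt_sphI_iterate hu hΦ (n - 2 + 1) hr) heq hl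

/-- A composition of rotation operators can be moved to the test function. -/
theorem compRots_transfer {n : ℕ} {u : E n → ℝ} (hu : ContDiffOn ℝ ∞ u (ball (0 : E n) 1))
    (L : List (Fin n × Fin n)) :
    ContDiffOn ℝ ∞ (compRots n L u) (ball 0 1) ∧
    ∀ Φ : E n → ℝ, ContDiff ℝ ∞ Φ → ∃ Ψ : E n → ℝ, ContDiff ℝ ∞ Ψ ∧
      ∀ r ∈ Ioo (0 : ℝ) 1, sphI (compRots n L u) Φ r = sphI u Ψ r := by
  induction L with
  | nil => exact ⟨hu, fun Φ hΦ => ⟨Φ, hΦ, fun _ _ => rfl⟩⟩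
  | cons q L ih =>
    have hc : compRots n (q :: L) u = rotOp n q.1 q.2 (compRots n L u) := rfl
    rw [hc]
    refine ⟨contDiffOn_rotOp _ _ ih.1, fun Φ hΦ => ?_⟩
    obtain ⟨Ψ, hΨ, h⟩ := ih.2 _ (contDiff_linOp (rotCLM q.1 q.2) hΦ)
    refine ⟨fun x => -Ψ x, hΨ.neg, fun r hr => ?_⟩
    rw [sphI_rot _ _ ih.1 hΦ hr, h r hr]
    simp only [sphI, mul_neg, integral_neg]

/-- An identity of pairings survives the application of powers of `N` on both sides, these being
the radial derivatives of the pairings. -/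
theorem sphI_iterate_congr {n : ℕ} {v w Φ Ψ : E n → ℝ} (hv : ContDiffOn ℝ ∞ v (ball (0 : E n) 1))
    (hw : ContDiffOn ℝ ∞ w (ball (0 : E n) 1)) (hΦ : ContDiff ℝ ∞ Φ) (hΨ : ContDiff ℝ ∞ Ψ)
    (h : ∀ r ∈ Ioo (0 : ℝ) 1, sphI v Φ r = sphI w Ψ r) (k : ℕ) :
    ∀ r ∈ Ioo (0 : ℝ) 1, sphI ((NOp n)^[k] v) Φ r = sphI ((NOp n)^[k] w) Ψ r := by
  induction k with
  | zero => exact h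
  | succ k ih =>
    intro r hr
    have h1 := hasDerivAt_sphI_iterate hv hΦ k hr
    have h2 := (hasDerivAt_sphI_iterate hw hΨ k hr).congr_of_eventuallyEq
      (f₁ := sphI ((NOp n)^[k] v) Φ)
      (by filter_upwards [isOpen_Ioo.mem_nhds hr] with s hs using ih s hs)
    exact (div_left_inj' hr.1.ne').1 (h1.unique h2)

/-- Let `u` be `H`-harmonic with a boundary distribution, `Y` a finite
composition of rotation operators `L_{i,j}` and `X = N^k ∘ Y`. If `k ≤ n−2` then `Xu` has a
boundary distribution; if `k = n−1` then `∫ Xu(rζ)Φ(ζ)dσ(ζ) = O(log(1/(1-r)))` as `r → 1⁻`,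
and in particular `(1-r²)∫ Xu(rζ)Φ(ζ)dσ(ζ) → 0`. -/
theorem stmt8 (n : ℕ) (hn : 3 ≤ n) (u : E n → ℝ)
    (hu : ContDiffOn ℝ ∞ u (ball (0 : E n) 1)) (hH : HHarmonic n u)
    (hbd : HasBoundaryDistribution n u)
    (L : List (Fin n × Fin n)) (hL : ∀ q ∈ L, q.1 ≠ q.2) (k : ℕ) :
    (k ≤ n - 2 → ∀ Φ : E n → ℝ, ContDiff ℝ ∞ Φ →
      ∃ l : ℝ, Tendsto
        (fun r : ℝ => ∫ ζ, (NOp n)^[k] (compRots n L u) (r • ζ) * Φ ζ ∂(sphMeasure n))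
        (𝓝[<] (1 : ℝ)) (𝓝 l)) ∧
    (k = n - 1 → ∀ Φ : E n → ℝ, ContDiff ℝ ∞ Φ →
      (∃ C : ℝ, ∀ᶠ r in 𝓝[<] (1 : ℝ),
        |∫ ζ, (NOp n)^[k] (compRots n L u) (r • ζ) * Φ ζ ∂(sphMeasure n)| ≤
          C * Real.log (1 / (1 - r))) ∧
      Tendsto
        (fun r : ℝ =>
          (1 - r ^ 2) * ∫ ζ, (NOp n)^[k] (compRots n L u) (r • ζ) * Φ ζ ∂(sphMeasure n))
        (𝓝[<] (1 : ℝ)) (𝓝 0)) := by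
  obtain ⟨hY, hYΦ⟩ := compRots_transfer hu L
  have key : ∀ Φ : E n → ℝ, ContDiff ℝ ∞ Φ → ∃ Ψ : E n → ℝ, ContDiff ℝ ∞ Ψ ∧
      ∀ᶠ r in 𝓝[<] (1 : ℝ), sphI ((NOp n)^[k] u) Ψ r =
        ∫ ζ, (NOp n)^[k] (compRots n L u) (r • ζ) * Φ ζ ∂(sphMeasure n) := by
    intro Φ hΦ
    obtain ⟨Ψ, hΨ, h⟩ := hYΦ Φ hΦ
    refine ⟨Ψ, hΨ, ?_⟩
    filter_upwards [Ioo_mem_nhdsLT one_pos] with r hr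
    exact (sphI_iterate_congr hY hu hΦ hΨ h k r hr).symm
  refine ⟨fun hk Φ hΦ => ?_, fun hk Φ hΦ => ?_⟩
  · obtain ⟨Ψ, hΨ, h⟩ := key Φ hΦ
    obtain ⟨l, hl⟩ := tendsto_sphI_iterate hn hu hH hbd k hk Ψ hΨ
    exact ⟨l, hl.congr' h⟩
  · obtain ⟨Ψ, hΨ, h⟩ := key Φ hΦ
    obtain rfl : k = n - 2 + 1 := by omega
    obtain ⟨l, hl⟩ := log_sphI_iterate hn hu hH hbd hΨ
    have hlog : ∀ᶠ r in 𝓝[<] (1 : ℝ), 0 < Real.log (1 / (1 - r)) := by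
      filter_upwards [Ioo_mem_nhdsLT one_pos] with r hr
      exact Real.log_pos (one_lt_one_div (sub_pos.2 hr.2) (by linarith [hr.1]))
    constructor
    · refine ⟨|l| + 1, ?_⟩
      filter_upwards [hl.abs.eventually_lt_const (lt_add_one |l|), hlog, h] with r h1 h2 h3
      rw [abs_div, abs_of_pos h2, div_lt_iff₀ h2] at h1
      rw [← h3]
      exact h1.le
    · have h1 := tendsto_one_sub_sq_mul_log.mul hl
      rw [zero_mul] at h1
      refine h1.congr' ?_
      filter_upwards [hlog, h] with r h2 h3
      rw [← h3]
      field_simp
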